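/- Let Pₙ be the path on n ≥ 3 vertices and let id : V(G₁) → V(G₂) be the identity function between two disjoint copies G₁, G₂ of Pₙ (matching corresponding vertices). Then dim(C(Pₙ, id)) = 2; moreover, the two end-vertices of G₁ form a minimum resolving set of C(Pₙ, id). -/

import Mathlib

/-- The functigraph `C(G, f)`: two disjoint copies of `G` (as `Sum.inl`/`Sum.inr`),
with an edge from each `Sum.inl u` to `Sum.inr (f u)`. -/
def functigraph {V : Type*} (G : SimpleGraph V) (f : V → V) : SimpleGraph (V ⊕ V) :=
  SimpleGraph.fromRel (fun x y =>
    match x, y with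
    | Sum.inl a, Sum.inl b => G.Adj a b
    | Sum.inr a, Sum.inr b => G.Adj a b
    | Sum.inl a, Sum.inr b => f a = b
    | Sum.inr _, Sum.inl _ => False)

/-- `S` is a resolving set of `H`: every pair of distinct vertices is resolved by some `w ∈ S`. -/
def IsResolving {V : Type*} (H : SimpleGraph V) (S : Set V) : Prop :=
  ∀ x y : V, x ≠ y → ∃ w ∈ S, H.dist x w ≠ H.dist y w

/-- The metric dimension of `H`: minimum cardinality of a (finite) resolving set. -/
noncomputable def metricDim {V : Type*} (H : SimpleGraph V) : ℕ :=
  sInf {k | ∃ S : Set V, IsResolving H S ∧ S.Finite ∧ S.ncard = k}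

/-- The cycle graph on `ZMod n` (for `n ≥ 3`): `i` is adjacent to `i ± 1`. -/
def cycGraph (n : ℕ) : SimpleGraph (ZMod n) :=
  SimpleGraph.fromRel (fun i j => j = i + 1)

/-- The closed neighborhood `N[S]` of a set `S` in `H`. -/
def closedNbhd {V : Type*} (H : SimpleGraph V) (S : Set V) : Set V :=
  S ∪ {x | ∃ s ∈ S, H.Adj x s}

/-! The functigraph of the identity is the prism `K₂ □ G`, in which distances are those of `G`, plus
one between the two copies. Let `S` be a nonempty set of vertices in the first copy that fails to
separate two vertices of the prism. Two vertices over the same `x` are separated by any `s ∈ S`, so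
the two vertices lie over distinct `x` and `y`, with `d(x, s) = d(y, s) + c` for a constant
`c ∈ {-1, 0, 1}` and all `s ∈ S`. A doubly resolving set excludes such equations for every constant,
and the two ends of a path form one because `d(x, 0) - d(x, n - 1)` determines `x`.

Conversely, a single vertex `w` cannot separate two of its neighbors, and in the prism over a
nontrivial connected graph every vertex has at least two. -/

open SimpleGraph

/-- `S` is a doubly resolving set of `H`: for distinct vertices `x` and `y`, the vectors of
distances from `x` and from `y` to the members of `S` do not differ by a constant. It is the
condition imposed on a set in `G` so that its copy resolves the prism over `G`. The differences are
taken in `ℤ` to avoid truncated subtraction. -/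
def IsDoublyResolving {V : Type*} (H : SimpleGraph V) (S : Set V) : Prop :=
  ∀ x y : V, x ≠ y → ∃ u ∈ S, ∃ v ∈ S,
    (H.dist x u : ℤ) - H.dist x v ≠ (H.dist y u : ℤ) - H.dist y v

section Resolving

variable {V : Type*} {H : SimpleGraph V} {S : Set V}

theorem IsDoublyResolving.exists_dist_ne_add (hS : IsDoublyResolving H S) {x y : V} (hxy : x ≠ y)
    (c : ℕ) : ∃ s ∈ S, H.dist x s ≠ H.dist y s + c := by
  by_contra! hconst
  obtain ⟨u, hu, v, hv, huv⟩ := hS x y hxy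
  have := hconst u hu
  have := hconst v hv
  omega

theorem IsResolving.neighborSet_subsingleton (hS : IsResolving H S) {w : V} (hSw : S ⊆ {w}) :
    (H.neighborSet w).Subsingleton := by
  intro x hx y hy
  by_contra hxy
  obtain ⟨s, hs, hne⟩ := hS x y hxy
  obtain rfl : s = w := hSw hs
  exact hne ((dist_eq_one_iff_adj.2 hx.symm).trans (dist_eq_one_iff_adj.2 hy.symm).symm)

theorem IsResolving.two_le_ncard [Nonempty V] (hS : IsResolving H S) (hfin : S.Finite)
    (hH : ∀ w, (H.neighborSet w).Nontrivial) : 2 ≤ S.ncard := by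
  by_contra! hlt
  obtain ⟨w, hw⟩ := (Set.ncard_le_one_iff_subset_singleton hfin).1 (Nat.le_of_lt_succ hlt)
  exact (hH w).not_subsingleton (hS.neighborSet_subsingleton hw)

theorem metricDim_eq_ncard (hS : IsResolving H S) (hfin : S.Finite)
    (hmin : ∀ T, IsResolving H T → T.Finite → S.ncard ≤ T.ncard) : metricDim H = S.ncard := by
  refine IsLeast.csInf_eq ⟨⟨S, hS, hfin, rfl⟩, ?_⟩
  rintro _ ⟨T, hT, hTfin, rfl⟩
  exact hmin T hT hTfin

end Resolving

theorem edist_map_iso {V W : Type*} {G : SimpleGraph V} {H : SimpleGraph W} (φ : G ≃g H)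
    (u v : V) : H.edist (φ u) (φ v) = G.edist u v := by
  apply le_antisymm
  · exact le_iInf fun p => (edist_le (p.map φ.toHom)).trans_eq (by rw [Walk.length_map])
  · refine le_iInf fun p => ?_
    simpa using edist_le (p.map φ.symm.toHom)

section Functigraph

variable {V : Type*} {G : SimpleGraph V} {f : V → V} {a b : V}

@[simp]
theorem functigraph_adj_inl_inl : (functigraph G f).Adj (Sum.inl a) (Sum.inl b) ↔ G.Adj a b := by
  simpa [functigraph, G.adj_comm b a] using Adj.ne

@[simp]
theorem functigraph_adj_inr_inr : (functigraph G f).Adj (Sum.inr a) (Sum.inr b) ↔ G.Adj a b := by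
  simpa [functigraph, G.adj_comm b a] using Adj.ne

@[simp]
theorem functigraph_adj_inl_inr : (functigraph G f).Adj (Sum.inl a) (Sum.inr b) ↔ f a = b := by
  simp [functigraph]

@[simp]
theorem functigraph_adj_inr_inl : (functigraph G f).Adj (Sum.inr b) (Sum.inl a) ↔ f a = b := by
  rw [adj_comm, functigraph_adj_inl_inr]

/-- The functigraph of the identity is the prism over `G`, that is, the box product of `K₂` and
`G`. The vertices of `K₂` are `false`, for the first copy of `G`, and `true`, for the second. -/
def prismIso (G : SimpleGraph V) : (⊤ : SimpleGraph Bool).boxProd G ≃g functigraph G id where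
  toEquiv := Equiv.boolProdEquivSum V
  map_rel_iff' := by
    rintro ⟨_ | _, a⟩ ⟨_ | _, b⟩ <;> simp [eq_comm]

theorem edist_prismIso (p q : Bool × V) :
    (functigraph G id).edist (prismIso G p) (prismIso G q) =
      (⊤ : SimpleGraph Bool).edist p.1 q.1 + G.edist p.2 q.2 := by
  rw [edist_map_iso, edist_boxProd]

theorem dist_functigraph_id_inl_inl (a b : V) :
    (functigraph G id).dist (Sum.inl a) (Sum.inl b) = G.dist a b := by
  have h := edist_prismIso (G := G) (false, a) (false, b)
  rw [edist_self, zero_add] at h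
  exact congrArg ENat.toNat h

theorem dist_functigraph_id_inr_inl (hab : G.Reachable a b) :
    (functigraph G id).dist (Sum.inr a) (Sum.inl b) = G.dist a b + 1 := by
  have h := edist_prismIso (G := G) (true, a) (false, b)
  have hK₂ : (⊤ : SimpleGraph Bool).edist true false = 1 := edist_top_of_ne (by decide)
  rw [hK₂, ← hab.coe_dist_eq_edist, add_comm] at h
  exact congrArg ENat.toNat h

theorem neighborSet_functigraph_id_nontrivial [Nontrivial V] (hG : G.Preconnected) (w : V ⊕ V) :
    ((functigraph G id).neighborSet w).Nontrivial := by
  rcases w with a | a <;> obtain ⟨b, hab⟩ := hG.exists_adj_of_nontrivial a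
  · exact ⟨Sum.inl b, by simpa, Sum.inr a, by simp, Sum.inl_ne_inr⟩
  · exact ⟨Sum.inr b, by simpa, Sum.inl a, by simp, Sum.inr_ne_inl⟩

theorem IsDoublyResolving.exists_dist_inl_ne_dist_inr {S : Set V} (hS : IsDoublyResolving G S)
    (hG : G.Preconnected) (hne : S.Nonempty) (a b : V) :
    ∃ w ∈ Sum.inl '' S,
      (functigraph G id).dist (Sum.inl a) w ≠ (functigraph G id).dist (Sum.inr b) w := by
  suffices ∃ s ∈ S, G.dist a s ≠ G.dist b s + 1 by
    obtain ⟨s, hs, h⟩ := this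
    refine ⟨Sum.inl s, Set.mem_image_of_mem _ hs, ?_⟩
    rwa [dist_functigraph_id_inl_inl, dist_functigraph_id_inr_inl (hG b s)]
  obtain rfl | hab := eq_or_ne a b
  · obtain ⟨s, hs⟩ := hne
    exact ⟨s, hs, (Nat.succ_ne_self _).symm⟩
  · exact hS.exists_dist_ne_add hab 1

theorem IsDoublyResolving.isResolving_functigraph_id {S : Set V} (hS : IsDoublyResolving G S)
    (hG : G.Preconnected) (hne : S.Nonempty) :
    IsResolving (functigraph G id) (Sum.inl '' S) := by
  rintro (a | a) (b | b) hab
  · obtain ⟨s, hs, h⟩ := hS.exists_dist_ne_add (ne_of_apply_ne Sum.inl hab) 0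
    refine ⟨Sum.inl s, Set.mem_image_of_mem _ hs, ?_⟩
    rwa [dist_functigraph_id_inl_inl, dist_functigraph_id_inl_inl]
  · exact hS.exists_dist_inl_ne_dist_inr hG hne a b
  · obtain ⟨w, hw, h⟩ := hS.exists_dist_inl_ne_dist_inr hG hne b a
    exact ⟨w, hw, h.symm⟩
  · obtain ⟨s, hs, h⟩ := hS.exists_dist_ne_add (ne_of_apply_ne Sum.inr hab) 0
    refine ⟨Sum.inl s, Set.mem_image_of_mem _ hs, ?_⟩
    rw [dist_functigraph_id_inr_inl (hG a s), dist_functigraph_id_inr_inl (hG b s)]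
    exact Nat.succ_ne_succ_iff.2 h

end Functigraph

section PathGraph

variable {n : ℕ} {i j : Fin n}

theorem val_le_add_length_of_walk_pathGraph (p : (pathGraph n).Walk i j) :
    (j : ℕ) ≤ i + p.length := by
  induction p with
  | nil => exact Nat.le_add_right _ _
  | cons h p ih =>
    rw [pathGraph_adj] at h
    rw [Walk.length_cons]
    omega

theorem exists_walk_pathGraph_length_eq (hij : i ≤ j) :
    ∃ p : (pathGraph n).Walk i j, p.length = (j : ℕ) - i := by
  obtain ⟨k, hk⟩ := Nat.exists_eq_add_of_le (Fin.le_def.1 hij)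
  induction k generalizing i with
  | zero =>
    obtain rfl : j = i := Fin.ext hk
    exact ⟨Walk.nil, (Nat.sub_self _).symm⟩
  | succ k ih =>
    let next : Fin n := ⟨i + 1, by omega⟩
    have hnext : (j : ℕ) = next + k := by rw [hk, Nat.add_right_comm, Nat.add_assoc]
    obtain ⟨p, hp⟩ := ih (hnext ▸ Nat.le_add_right _ _ : (next : ℕ) ≤ j) hnext
    have hadj : (pathGraph n).Adj i next := pathGraph_adj.2 (Or.inl rfl)
    exact ⟨p.cons hadj, by rw [Walk.length_cons]; omega⟩

theorem dist_pathGraph_of_le (hij : i ≤ j) : (pathGraph n).dist i j = (j : ℕ) - i := by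
  apply le_antisymm
  · obtain ⟨p, hp⟩ := exists_walk_pathGraph_length_eq hij
    exact hp ▸ dist_le p
  · obtain ⟨p, hp⟩ := (pathGraph_preconnected n i j).exists_walk_length_eq_dist
    exact hp ▸ Nat.sub_le_of_le_add (by have := val_le_add_length_of_walk_pathGraph p; omega)

theorem isDoublyResolving_pathGraph_ends (hn : 0 < n) :
    IsDoublyResolving (pathGraph n) {⟨0, hn⟩, ⟨n - 1, Nat.sub_one_lt_of_lt hn⟩} := by
  have dist_first (x : Fin n) : (pathGraph n).dist x ⟨0, hn⟩ = x := by
    rw [dist_comm, dist_pathGraph_of_le (Nat.zero_le _), Nat.sub_zero]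
  have dist_last (x : Fin n) :
      (pathGraph n).dist x ⟨n - 1, Nat.sub_one_lt_of_lt hn⟩ = n - 1 - x :=
    dist_pathGraph_of_le (Nat.le_sub_one_of_lt x.isLt)
  intro x y hxy
  refine ⟨_, Set.mem_insert _ _, _, Set.mem_insert_of_mem _ rfl, ?_⟩
  rw [dist_first, dist_first, dist_last, dist_last]
  omega

end PathGraph

theorem stmt2_general {V : Type*} {G : SimpleGraph V} (hG : G.Preconnected) {u v : V}
    (huv : u ≠ v) (hS : IsDoublyResolving G {u, v}) :
    metricDim (functigraph G id) = 2 ∧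
    IsResolving (functigraph G id) {Sum.inl u, Sum.inl v} ∧
    ({Sum.inl u, Sum.inl v} : Set (V ⊕ V)).ncard = metricDim (functigraph G id) := by
  have : Nontrivial V := nontrivial_of_ne u v huv
  have hres : IsResolving (functigraph G id) {Sum.inl u, Sum.inl v} := by
    simpa only [Set.image_pair] using hS.isResolving_functigraph_id hG (Set.insert_nonempty u {v})
  have hcard : ({Sum.inl u, Sum.inl v} : Set (V ⊕ V)).ncard = 2 :=
    Set.ncard_pair (Sum.inl_injective.ne huv)
  have hdim := metricDim_eq_ncard hres (Set.toFinite _) fun T hT hfin =>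
    hcard.trans_le (hT.two_le_ncard hfin (neighborSet_functigraph_id_nontrivial hG))
  exact ⟨hdim.trans hcard, hres, hdim.symm⟩

theorem stmt2 (n : ℕ) (hn : 3 <= n) :
    metricDim (functigraph (SimpleGraph.pathGraph n) id) = 2 ∧
    IsResolving (functigraph (SimpleGraph.pathGraph n) id)
      {Sum.inl ⟨0, by omega⟩, Sum.inl ⟨n - 1, by omega⟩} ∧
    ({Sum.inl ⟨0, by omega⟩, Sum.inl ⟨n - 1, by omega⟩} : Set (Fin n ⊕ Fin n)).ncard =
      metricDim (functigraph (SimpleGraph.pathGraph n) id) :=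
  stmt2_general (pathGraph_preconnected n) (Fin.ne_of_val_ne (by grind))
    (isDoublyResolving_pathGraph_ends (by omega))
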